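/- For any w ∈ W with w ≠ 1 there exist w' ∈ W, γ ∈ R^+ and an index 1 ≤ j ≤ n such that w = w's_γ, ℓ(w) = ℓ(w') + 1, ⟨χ_j, γ^∨⟩ > 0, and gr(w) = gr(w') + e_m, where m is the unique index with α_j ∈ Δ_m \ Δ_{m−1}. -/

import Mathlib

/-!
Let `Δ_{m+1}` be the first set of the chain with `w ∈ W_{Δ_{m+1}}`, and write `w = x u` with `x` of
minimal length in `w W_{Δ_m}` and `u ∈ W_{Δ_m}`; then `x ≠ 1`.  Some simple reflection `s_a` with
`a ∈ Δ_{m+1}` is a left descent of `x` (`exists_left_descent`), and `x' = s_a x` is again minimal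
in its coset.  Put `w' = s_a w = x' u` and `γ = w'⁻¹ α_a`.  Then `w = w' s_γ`, and only
the factor with index `m` of the decomposition changes, from `x` to `x'`.

Since `x` is positive on the roots of `R_{Δ_m}` and sends `u γ > 0` to `-α_a`, the root `γ` is
not in `R_{Δ_m}`, while it is in `R_{Δ_{m+1}}`.  So `γ` has a positive coefficient at some
`j ∈ Δ_{m+1} \ Δ_m`, and `cor_pos` (the coroot of a positive root is nonnegative, and positive on the
support of the root) gives `⟨χ_j, γ^∨⟩ > 0`.

The two general inputs are the exchange property (`exchange`), which yields
`ℓ(w s_j) = ℓ(w) ± 1` according to the sign of `w α_j`, and the additivity `ℓ(v u) = ℓ(v) + ℓ(u)`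
for minimal coset representatives `v` (`len_mul_of_posOn`), which also yields the uniqueness of the
decomposition.
-/

open scoped BigOperators

/-- A reduced crystallographic root system with a fixed base `α_1, …, α_n` of simple
roots, bundled with its Weyl group `W`.  A root `γ` is recorded by its integer
coordinate vector in the basis of simple roots (so the `i`-th simple root is
`Pi.single i 1`), and `cor γ` is the coordinate vector of the coroot `γ^∨` in the
basis of simple coroots (hence `cor γ i = ⟨χ_i, γ^∨⟩` for the fundamental weights
`χ_i`).  `A i j = ⟨α_i, α_j^∨⟩` is the Cartan matrix, `σ γ` is the reflection `s_γ`
and `act` is the action of the Weyl group on the root lattice. -/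
structure RootSystemData (n : ℕ) where
  A : Fin n → Fin n → ℤ
  R : Finset (Fin n → ℤ)
  cor : (Fin n → ℤ) → (Fin n → ℤ)
  W : Type
  [grp : Group W]
  σ : (Fin n → ℤ) → W
  act : W → (Fin n → ℤ) → (Fin n → ℤ)
  simple_mem : ∀ i : Fin n, (Pi.single i 1 : Fin n → ℤ) ∈ R
  root_ne_zero : ∀ γ ∈ R, γ ≠ 0
  neg_mem : ∀ γ ∈ R, -γ ∈ R
  pos_or_neg : ∀ γ ∈ R, (∀ i, 0 ≤ γ i) ∨ (∀ i, γ i ≤ 0)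
  reduced : ∀ γ ∈ R, ∀ k : ℤ, k • γ ∈ R → k = 1 ∨ k = -1
  cor_simple : ∀ i : Fin n, cor (Pi.single i 1) = Pi.single i 1
  cor_neg : ∀ γ ∈ R, cor (-γ) = -(cor γ)
  pair_self : ∀ γ ∈ R, (∑ i, ∑ j, γ i * A i j * cor γ j) = 2
  act_one : ∀ x, act 1 x = x
  act_mul : ∀ w w' x, act (w * w') x = act w (act w' x)
  act_refl : ∀ γ ∈ R, ∀ x, act (σ γ) x = x - (∑ i, ∑ j, x i * A i j * cor γ j) • γ
  act_mem : ∀ (w : W), ∀ γ ∈ R, act w γ ∈ R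
  cor_refl : ∀ γ ∈ R, ∀ β ∈ R,
    cor (act (σ γ) β) = cor β - (∑ i, ∑ j, γ i * A i j * cor β j) • cor γ
  refl_sq : ∀ γ ∈ R, σ γ * σ γ = 1
  refl_act : ∀ (w : W), ∀ γ ∈ R, σ (act w γ) = w * σ γ * w⁻¹
  act_faithful : ∀ w w' : W, (∀ γ ∈ R, act w γ = act w' γ) → w = w'
  generated : ∀ w : W, ∃ l : List (Fin n), w = (l.map fun i => σ (Pi.single i 1)).prod

namespace RootSystemData

instance {n : ℕ} (c : RootSystemData n) : Group c.W := c.grp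

/-- the pairing `⟨x, λ⟩` between an element `x` of the root lattice (coordinates in
the basis of simple roots) and an element `λ` of the coroot lattice (coordinates in
the basis of simple coroots) -/
def pair {n : ℕ} (c : RootSystemData n) (x lam : Fin n → ℤ) : ℤ :=
  ∑ i, ∑ j, x i * c.A i j * lam j

/-- the `i`-th simple root -/
def sroot {n : ℕ} (_c : RootSystemData n) (i : Fin n) : Fin n → ℤ := Pi.single i 1

/-- the simple reflection `s_i` -/
def s {n : ℕ} (c : RootSystemData n) (i : Fin n) : c.W := c.σ (c.sroot i)

/-- `s_{α_{t+1}}` for a `0`-based natural number index `t` (`= 1` when out of range) -/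
def sN {n : ℕ} (c : RootSystemData n) (t : ℕ) : c.W := if h : t < n then c.s ⟨t, h⟩ else 1

/-- `⟨2ρ, λ⟩ = Σ_{β ∈ R^+} ⟨β, λ⟩`, where `ρ` is the half-sum of the positive roots -/
def pairTwoRho {n : ℕ} (c : RootSystemData n) (lam : Fin n → ℤ) : ℤ :=
  ∑ β ∈ c.R, if ∀ i, 0 ≤ β i then c.pair β lam else 0

/-- the length of `w ∈ W` with respect to the simple reflections -/
noncomputable def len {n : ℕ} (c : RootSystemData n) (w : c.W) : ℕ :=
  sInf {k | ∃ l : List (Fin n), l.length = k ∧ (l.map c.s).prod = w}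

/-- the parabolic subgroup `W_S` generated by the simple reflections indexed by `S` -/
def Wsub {n : ℕ} (c : RootSystemData n) (S : Finset (Fin n)) : Subgroup c.W :=
  Subgroup.closure (c.s '' ↑S)

/-- `w ∈ W_T^S`: `w ∈ W_T` and `w` has minimal length in the coset `w W_S` -/
def MinRep {n : ℕ} (c : RootSystemData n) (T S : Finset (Fin n)) (w : c.W) : Prop :=
  w ∈ c.Wsub T ∧ ∀ u ∈ c.Wsub S, c.len w ≤ c.len (w * u)

/-- `w` is the longest element of `W_S` -/
def IsLongest {n : ℕ} (c : RootSystemData n) (S : Finset (Fin n)) (w : c.W) : Prop :=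
  w ∈ c.Wsub S ∧ ∀ v ∈ c.Wsub S, c.len v ≤ c.len w

end RootSystemData

/-- the support of `γ` is contained in `S`, i.e. `γ` lies in the span of
`{α_i : i ∈ S}` (for a root `γ`, membership in `R_S`) -/
def suppIn {n : ℕ} (S : Finset (Fin n)) (γ : Fin n → ℤ) : Prop :=
  ∀ i, i ∉ S → γ i = 0

/-- `Δ_j` for `0 ≤ j ≤ r+1`: the index set of the first `j` simple roots for `j ≤ r`,
and all of `Δ` for `j = r+1`.  (Indices of simple roots are `0`-based, so
`α_1, …, α_j` correspond to the indices `0, …, j-1`.) -/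
def deltaSet (n r j : ℕ) : Finset (Fin n) :=
  if j = r + 1 then Finset.univ else Finset.univ.filter fun i => (i : ℕ) < j

namespace RootSystemData

/-- `v 0, …, v r` (standing for `v_1, …, v_{r+1}`) is the decomposition of `w`
associated to `(Δ_P, Υ)`:  each `v_i ∈ W_{Δ_i}^{Δ_{i-1}}` and `w = v_{r+1} v_r ⋯ v_1`. -/
def IsDecomp {n : ℕ} (c : RootSystemData n) (r : ℕ) (w : c.W)
    (v : Fin (r + 1) → c.W) : Prop :=
  (∀ k : Fin (r + 1), c.MinRep (deltaSet n r ((k : ℕ) + 1)) (deltaSet n r (k : ℕ)) (v k)) ∧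
    w = (List.ofFn v).reverse.prod

/-- the first `m` simple roots `α_1, …, α_m` form a path of type `A_m`:
`⟨α_i, α_j^∨⟩ = -1` if `|i-j| = 1` and `⟨α_i, α_j^∨⟩ = 0` if `|i-j| ≥ 2`. -/
def PathA {n : ℕ} (c : RootSystemData n) (m : ℕ) : Prop :=
  ∀ i j : Fin n, (i : ℕ) < m → (j : ℕ) < m →
    (((i : ℕ) + 1 = (j : ℕ) ∨ (j : ℕ) + 1 = (i : ℕ)) → c.A i j = -1) ∧
    ((i : ℕ) + 2 ≤ (j : ℕ) ∨ (j : ℕ) + 2 ≤ (i : ℕ) → c.A i j = 0)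

/-- `u_{[k,m]} = s_k s_{k+1} ⋯ s_m` (`1`-based indices; `u_{[k,m]} = 1` for `k > m`) -/
def uu {n : ℕ} (c : RootSystemData n) (k m : ℕ) : c.W :=
  ((List.range' k (m + 1 - k)).map fun t => c.sN (t - 1)).prod

/-- `u_i^{(m)} = s_{m-i+1} s_{m-i+2} ⋯ s_m` -/
def uElt {n : ℕ} (c : RootSystemData n) (i m : ℕ) : c.W := c.uu (m - i + 1) m

end RootSystemData

/-- strict lexicographic order on `Fin m → ℤ` -/
def lexLT {m : ℕ} (x y : Fin m → ℤ) : Prop :=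
  ∃ j, x j < y j ∧ ∀ k, k < j → x k = y k

/-- lexicographic order on `Fin m → ℤ` -/
def lexLE {m : ℕ} (x y : Fin m → ℤ) : Prop := x = y ∨ lexLT x y

/-- the grading `gr(q_{α_{j+1}^∨}) ∈ ℤ^{r+1}` (for the `0`-based index `j < r`), when
`Δ_P` is of type `A_r`: in `1`-based terms, `gr(q_{α_1^∨}) = 2·e_1` and
`gr(q_{α_j^∨}) = (1-j)·e_{j-1} + (1+j)·e_j` for `2 ≤ j ≤ r`. -/
def grQ (r j : ℕ) : Fin (r + 1) → ℤ := fun k =>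
  (if (k : ℕ) = j then (j : ℤ) + 2 else 0) + (if (k : ℕ) + 1 = j then -(j : ℤ) else 0)

/-- the grading `gr(q_λ)` for `λ ∈ Q_P^∨` (coordinates in simple coroots), extended
additively from the `gr(q_{α_j^∨})`, when `Δ_P` is of type `A_r` -/
def grQlam (n r : ℕ) (lam : Fin n → ℤ) : Fin (r + 1) → ℤ :=
  fun k => ∑ j, lam j * grQ r (j : ℕ) k

namespace RootSystemData

variable {n : ℕ} (c : RootSystemData n)

/-! ### The pairing and the invariant form -/

lemma pair_add_left (x y l : Fin n → ℤ) : c.pair (x + y) l = c.pair x l + c.pair y l := by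
  simp only [pair, Pi.add_apply, add_mul, Finset.sum_add_distrib]

lemma pair_smul_left (k : ℤ) (x l : Fin n → ℤ) : c.pair (k • x) l = k * c.pair x l := by
  simp only [pair, Pi.smul_apply, smul_eq_mul, Finset.mul_sum, mul_assoc]

lemma pair_sub_left (x y l : Fin n → ℤ) : c.pair (x - y) l = c.pair x l - c.pair y l := by
  simp only [pair, Pi.sub_apply, sub_mul, Finset.sum_sub_distrib]

lemma pair_sub_right (x l l' : Fin n → ℤ) : c.pair x (l - l') = c.pair x l - c.pair x l' := by
  simp only [pair, Pi.sub_apply, mul_sub, Finset.sum_sub_distrib]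

lemma pair_smul_right (k : ℤ) (x l : Fin n → ℤ) : c.pair x (k • l) = k * c.pair x l := by
  simp only [pair, Pi.smul_apply, smul_eq_mul, Finset.mul_sum]
  refine Finset.sum_congr rfl fun i _ => Finset.sum_congr rfl fun j _ => ?_
  ring

lemma act_refl' {γ : Fin n → ℤ} (h : γ ∈ c.R) (x : Fin n → ℤ) :
    c.act (c.σ γ) x = x - c.pair x (c.cor γ) • γ := c.act_refl γ h x

lemma cor_refl' {γ β : Fin n → ℤ} (h : γ ∈ c.R) (hβ : β ∈ c.R) :
    c.cor (c.act (c.σ γ) β) = c.cor β - c.pair γ (c.cor β) • c.cor γ := c.cor_refl γ h β hβ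

lemma pair_self' {γ : Fin n → ℤ} (h : γ ∈ c.R) : c.pair γ (c.cor γ) = 2 := c.pair_self γ h

lemma sroot_mem (i : Fin n) : c.sroot i ∈ c.R := c.simple_mem i

lemma cor_sroot (i : Fin n) : c.cor (c.sroot i) = c.sroot i := c.cor_simple i

lemma act_refl_refl {γ : Fin n → ℤ} (h : γ ∈ c.R) (x : Fin n → ℤ) :
    c.act (c.σ γ) (c.act (c.σ γ) x) = x := by
  rw [← c.act_mul, c.refl_sq γ h, c.act_one]

lemma act_refl_self {γ : Fin n → ℤ} (h : γ ∈ c.R) : c.act (c.σ γ) γ = -γ := by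
  rw [c.act_refl' h, c.pair_self' h]
  module

lemma pair_refl {γ δ : Fin n → ℤ} (h : γ ∈ c.R) (hδ : δ ∈ c.R) (x : Fin n → ℤ) :
    c.pair (c.act (c.σ γ) x) (c.cor (c.act (c.σ γ) δ)) = c.pair x (c.cor δ) := by
  rw [c.act_refl' h, c.cor_refl' h hδ]
  simp only [pair_sub_left, pair_sub_right, pair_smul_left, pair_smul_right, c.pair_self' h]
  ring

/-- The Weyl-invariant symmetric form `(x, y) = ∑_{δ ∈ R} ⟨x, δ^∨⟩ ⟨y, δ^∨⟩` on the root lattice. -/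
def form (x y : Fin n → ℤ) : ℤ := ∑ δ ∈ c.R, c.pair x (c.cor δ) * c.pair y (c.cor δ)

lemma form_comm (x y : Fin n → ℤ) : c.form x y = c.form y x :=
  Finset.sum_congr rfl fun _ _ => mul_comm _ _

lemma form_refl {γ : Fin n → ℤ} (h : γ ∈ c.R) (x y : Fin n → ℤ) :
    c.form (c.act (c.σ γ) x) (c.act (c.σ γ) y) = c.form x y := by
  symm
  unfold form
  refine Finset.sum_bij (fun δ _ => c.act (c.σ γ) δ) (fun δ hδ => c.act_mem _ δ hδ) ?_ ?_ ?_
  · intro a _ b _ hab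
    simpa [c.act_refl_refl h] using congrArg (c.act (c.σ γ)) hab
  · exact fun b hb => ⟨c.act (c.σ γ) b, c.act_mem _ b hb, c.act_refl_refl h b⟩
  · intro δ hδ
    rw [c.pair_refl h hδ, c.pair_refl h hδ]

lemma form_sub_smul_left (x y z : Fin n → ℤ) (k : ℤ) :
    c.form (x - k • y) z = c.form x z - k * c.form y z := by
  simp only [form, pair_sub_left, pair_smul_left, Finset.mul_sum, ← Finset.sum_sub_distrib]
  refine Finset.sum_congr rfl fun i _ => ?_
  ring

lemma form_neg_right (x y : Fin n → ℤ) : c.form x (-y) = - c.form x y := by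
  have := c.form_sub_smul_left 0 y x 1
  have h0 : c.form 0 x = 0 := by simp [form, pair]
  rw [h0, zero_sub, one_smul, one_mul] at this
  rw [c.form_comm, this, c.form_comm, zero_sub]

lemma form_self_pos {γ : Fin n → ℤ} (h : γ ∈ c.R) : 0 < c.form γ γ := by
  refine Finset.sum_pos' (fun δ _ => mul_self_nonneg _) ⟨γ, h, ?_⟩
  rw [c.pair_self' h]
  norm_num

lemma two_form {γ : Fin n → ℤ} (h : γ ∈ c.R) (x : Fin n → ℤ) :
    2 * c.form x γ = c.pair x (c.cor γ) * c.form γ γ := by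
  have h1 := c.form_refl h x γ
  rw [c.act_refl_self h, c.form_neg_right, c.act_refl' h, c.form_sub_smul_left] at h1
  linarith

lemma pair_pos_symm {γ δ : Fin n → ℤ} (h : γ ∈ c.R) (hδ : δ ∈ c.R)
    (hp : 0 < c.pair γ (c.cor δ)) : 0 < c.pair δ (c.cor γ) := by
  have h1 := c.two_form hδ γ
  have h2 := c.two_form h δ
  rw [c.form_comm δ γ] at h2
  have h3 := mul_pos hp (c.form_self_pos hδ)
  exact pos_of_mul_pos_left (by linarith) (c.form_self_pos h).le

/-! ### Positive roots -/

lemma act_s (i : Fin n) (x : Fin n → ℤ) :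
    c.act (c.s i) x = x - c.pair x (c.sroot i) • c.sroot i := by
  unfold s
  rw [c.act_refl' (c.sroot_mem i), c.cor_sroot]

lemma act_s_apply_ne (i j : Fin n) (hj : j ≠ i) (x : Fin n → ℤ) :
    c.act (c.s i) x j = x j := by
  rw [c.act_s]
  simp [sroot, hj]

lemma s_mul_s (i : Fin n) : c.s i * c.s i = 1 := c.refl_sq _ (c.sroot_mem i)

lemma s_inv (i : Fin n) : (c.s i)⁻¹ = c.s i := inv_eq_of_mul_eq_one_left (c.s_mul_s i)

lemma pos_or_neg' {γ : Fin n → ℤ} (h : γ ∈ c.R) : 0 ≤ γ ∨ γ ≤ 0 := c.pos_or_neg γ h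

lemma nonneg_of_pos_apply {γ : Fin n → ℤ} (h : γ ∈ c.R) {j : Fin n} (hj : 0 < γ j) : 0 ≤ γ := by
  rcases c.pos_or_neg' h with h | h
  · exact h
  · exact absurd (h j) (not_le.mpr hj)

/-- A simple reflection `s_i` permutes the positive roots other than `α_i`. -/
lemma act_s_nonneg {i : Fin n} {γ : Fin n → ℤ} (h : γ ∈ c.R) (h0 : 0 ≤ γ) (hne : γ ≠ c.sroot i) :
    0 ≤ c.act (c.s i) γ := by
  by_cases hex : ∃ j, j ≠ i ∧ 0 < γ j
  · obtain ⟨j, hj, hp⟩ := hex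
    exact c.nonneg_of_pos_apply (c.act_mem _ _ h) (j := j) (by rwa [c.act_s_apply_ne i j hj])
  · exfalso
    push Not at hex
    have hγ : γ = γ i • c.sroot i := by
      funext j
      by_cases hj : j = i
      · subst hj
        simp [sroot]
      · simp only [sroot, Pi.smul_apply, Pi.single_eq_of_ne hj, smul_zero]
        exact le_antisymm (hex j hj) (h0 j)
    have := c.reduced _ (c.sroot_mem i) (γ i) (hγ ▸ h)
    have h1 : 0 ≤ γ i := h0 i
    rcases this with h2 | h2
    · rw [h2, one_smul] at hγ
      exact hne hγ
    · omega

/-- The coroot of a positive root `γ` has nonnegative coefficients, which are positive on the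
support of `γ`.  Induction on the height, bounded by `N`: `⟨γ, γ^∨⟩ = 2` provides a simple root `α_i` in the support of `γ` with
`⟨α_i, γ^∨⟩ > 0`, and then `s_i γ` is a positive root of smaller height unless `γ = α_i`. -/
lemma cor_pos : ∀ (N : ℕ) (γ : Fin n → ℤ), γ ∈ c.R → 0 ≤ γ → ∑ i, γ i ≤ N →
    ∀ j, 0 ≤ c.cor γ j ∧ (0 < γ j → 0 < c.cor γ j) := by
  intro N
  induction N with
  | zero =>
    intro γ h h0 hs
    exfalso
    apply c.root_ne_zero γ h
    have : ∑ i, γ i = 0 := le_antisymm (by simpa using hs) (Finset.sum_nonneg fun i _ => h0 i)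
    rw [Finset.sum_eq_zero_iff_of_nonneg (fun i _ => h0 i)] at this
    funext i
    exact this i (Finset.mem_univ i)
  | succ N ih =>
    intro γ h h0 hs j
    have hsum : ∑ i, γ i * c.pair (c.sroot i) (c.cor γ) = 2 := by
      rw [← c.pair_self' h]
      unfold pair
      refine Finset.sum_congr rfl fun i _ => ?_
      rw [Finset.sum_eq_single i]
      · simp [sroot, Finset.mul_sum, mul_assoc]
      · intro b _ hb
        simp [sroot, hb]
      · simp
    obtain ⟨i, -, hi⟩ := Finset.exists_lt_of_sum_lt
      (s := Finset.univ) (f := fun _ : Fin n => (0 : ℤ))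
      (g := fun i => γ i * c.pair (c.sroot i) (c.cor γ)) (by rw [hsum]; simp)
    have hp : 0 < c.pair (c.sroot i) (c.cor γ) := pos_of_mul_pos_right hi (h0 i)
    by_cases hne : γ = c.sroot i
    · rw [hne, c.cor_sroot]
      refine ⟨?_, id⟩
      have := h0 j
      rwa [hne] at this
    · have hq : 0 < c.pair γ (c.sroot i) := by
        have := c.pair_pos_symm (c.sroot_mem i) h hp
        rwa [c.cor_sroot] at this
      have hcor : c.cor (c.act (c.s i) γ)
          = c.cor γ - c.pair (c.sroot i) (c.cor γ) • c.sroot i := by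
        unfold s
        rw [c.cor_refl' (c.sroot_mem i) h, c.cor_sroot]
      have hht : ∑ k, c.act (c.s i) γ k ≤ N := by
        rw [c.act_s]
        simp only [Pi.sub_apply, Finset.sum_sub_distrib, Pi.smul_apply, smul_eq_mul,
          ← Finset.mul_sum, sroot, Finset.sum_pi_single', Finset.mem_univ, if_true]
        push_cast at hs
        have : c.pair γ (Pi.single i 1) = c.pair γ (c.sroot i) := rfl
        linarith
      obtain ⟨h1, h2⟩ := ih _ (c.act_mem _ _ h) (c.act_s_nonneg h h0 hne) hht j
      rw [hcor] at h1 h2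
      by_cases hj : j = i
      · subst hj
        simp only [sroot, Pi.sub_apply, Pi.smul_apply, Pi.single_eq_same, smul_eq_mul,
          mul_one] at h1
        have : c.pair (Pi.single j 1) (c.cor γ) = c.pair (c.sroot j) (c.cor γ) := rfl
        constructor
        · linarith
        · intro _
          linarith
      · rw [c.act_s_apply_ne i j hj] at h2
        simp only [sroot, Pi.sub_apply, Pi.smul_apply, Pi.single_eq_of_ne hj, smul_zero,
          sub_zero] at h1 h2
        exact ⟨h1, h2⟩

/-! ### Linearity of the action -/

lemma act_linear (w : c.W) : (∀ x y, c.act w (x + y) = c.act w x + c.act w y) ∧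
    ∀ (k : ℤ) x, c.act w (k • x) = k • c.act w x := by
  obtain ⟨l, rfl⟩ := c.generated w
  induction l with
  | nil => simp [c.act_one]
  | cons i l ih =>
    obtain ⟨h1, h2⟩ := ih
    simp only [List.map_cons, List.prod_cons, c.act_mul]
    constructor
    · intro x y
      rw [h1, c.act_refl' (c.simple_mem i), c.act_refl' (c.simple_mem i),
        c.act_refl' (c.simple_mem i), pair_add_left]
      module
    · intro k x
      rw [h2, c.act_refl' (c.simple_mem i), c.act_refl' (c.simple_mem i), pair_smul_left]
      module

/-- The action of `w` as a linear map. -/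
def actL (w : c.W) : (Fin n → ℤ) →ₗ[ℤ] (Fin n → ℤ) where
  toFun := c.act w
  map_add' := (c.act_linear w).1
  map_smul' := (c.act_linear w).2

lemma act_neg (w : c.W) (x : Fin n → ℤ) : c.act w (-x) = - c.act w x := (c.actL w).map_neg x

lemma act_eq_sum (w : c.W) (x : Fin n → ℤ) :
    c.act w x = ∑ i, x i • c.act w (c.sroot i) := by
  have hx : x = ∑ i, x i • c.sroot i := by
    funext j
    simp [sroot, Finset.sum_apply, Pi.single_apply]
  have := congrArg (c.actL w) hx
  rw [map_sum] at this
  simp only [map_smul] at this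
  exact this

/-! ### The exchange property and the length function -/

/-- Exchange property: if `w α_j < 0`, then a word for `w s_j` arises from a word for `w` by
deleting a letter; only its length is recorded. -/
lemma exchange (j : Fin n) (l : List (Fin n)) (h : ¬ 0 ≤ c.act (l.map c.s).prod (c.sroot j)) :
    ∃ l' : List (Fin n), l'.length + 1 = l.length ∧
      (l'.map c.s).prod = (l.map c.s).prod * c.s j := by
  induction l with
  | nil =>
    exfalso
    apply h
    rw [List.map_nil, List.prod_nil, c.act_one]
    exact Pi.single_nonneg.mpr zero_le_one
  | cons i l ih =>
    by_cases h0 : 0 ≤ c.act (l.map c.s).prod (c.sroot j)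
    · have heq : c.act (l.map c.s).prod (c.sroot j) = c.sroot i := by
        by_contra hne
        apply h
        rw [List.map_cons, List.prod_cons, c.act_mul]
        exact c.act_s_nonneg (c.act_mem _ _ (c.sroot_mem j)) h0 hne
      refine ⟨l, rfl, ?_⟩
      have h2 := c.refl_act (l.map c.s).prod _ (c.sroot_mem j)
      rw [heq] at h2
      change c.s i = _ * c.s j * _ at h2
      rw [List.map_cons, List.prod_cons]
      rw [h2]
      simp [mul_assoc, c.s_mul_s]
    · obtain ⟨l', h1, h2⟩ := ih h0
      exact ⟨i :: l', by simp [h1], by simp [h2, mul_assoc]⟩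

lemma exists_word (w : c.W) : ∃ l : List (Fin n), l.length = c.len w ∧ (l.map c.s).prod = w := by
  have hne : {k | ∃ l : List (Fin n), l.length = k ∧ (l.map c.s).prod = w}.Nonempty := by
    obtain ⟨l, hl⟩ := c.generated w
    exact ⟨l.length, l, rfl, hl.symm⟩
  exact Nat.sInf_mem hne

lemma len_le {w : c.W} {l : List (Fin n)} (h : (l.map c.s).prod = w) : c.len w ≤ l.length :=
  Nat.sInf_le ⟨l, rfl, h⟩

lemma len_one : c.len 1 = 0 := by
  simpa using c.len_le (w := 1) (l := []) (by simp)

lemma eq_one_of_len {w : c.W} (h : c.len w = 0) : w = 1 := by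
  obtain ⟨l, h1, h2⟩ := c.exists_word w
  rw [h, List.length_eq_zero_iff] at h1
  simpa [h1] using h2.symm

lemma len_mul_s_le (w : c.W) (j : Fin n) : c.len (w * c.s j) ≤ c.len w + 1 := by
  obtain ⟨l, h1, h2⟩ := c.exists_word w
  simpa [h1] using c.len_le (w := w * c.s j) (l := l ++ [j]) (by simp [h2])

lemma len_inv_le (w : c.W) : c.len w⁻¹ ≤ c.len w := by
  obtain ⟨l, h1, h2⟩ := c.exists_word w
  rw [← h1, ← List.length_reverse]
  apply c.len_le
  rw [← h2, List.prod_inv_reverse, List.map_reverse, List.map_map]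
  congr 2
  exact List.map_congr_left fun i _ => (c.s_inv i).symm

lemma len_inv (w : c.W) : c.len w⁻¹ = c.len w :=
  le_antisymm (c.len_inv_le w) (by simpa using c.len_inv_le w⁻¹)

lemma len_mul_s_of_neg {w : c.W} {j : Fin n} (h : ¬ 0 ≤ c.act w (c.sroot j)) :
    c.len (w * c.s j) + 1 = c.len w := by
  obtain ⟨l, h1, h2⟩ := c.exists_word w
  rw [← h2] at h
  obtain ⟨l', h3, h4⟩ := c.exchange j l h
  rw [h2] at h4
  have h5 := c.len_le h4
  have h6 := c.len_mul_s_le (w * c.s j) j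
  rw [mul_assoc, c.s_mul_s, mul_one] at h6
  omega

lemma not_nonneg_neg {γ : Fin n → ℤ} (h : γ ∈ c.R) (h0 : 0 ≤ γ) : ¬ 0 ≤ -γ := fun h1 =>
  c.root_ne_zero γ h (le_antisymm (neg_nonneg.mp h1) h0)

lemma neg_nonneg_of {γ : Fin n → ℤ} (h : γ ∈ c.R) (h0 : ¬ 0 ≤ γ) : 0 ≤ -γ :=
  neg_nonneg.mpr ((c.pos_or_neg' h).resolve_left h0)

lemma len_mul_s_of_pos {w : c.W} {j : Fin n} (h : 0 ≤ c.act w (c.sroot j)) :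
    c.len (w * c.s j) = c.len w + 1 := by
  have h1 : c.act (w * c.s j) (c.sroot j) = - c.act w (c.sroot j) := by
    rw [c.act_mul, s, c.act_refl_self (c.sroot_mem j), c.act_neg]
  have h2 := c.len_mul_s_of_neg (w := w * c.s j) (j := j)
    (by rw [h1]; exact c.not_nonneg_neg (c.act_mem _ _ (c.sroot_mem j)) h)
  rw [mul_assoc, c.s_mul_s, mul_one] at h2
  exact h2.symm

lemma len_s_mul_le (w : c.W) (j : Fin n) : c.len (c.s j * w) ≤ c.len w + 1 := by
  have := c.len_mul_s_le w⁻¹ j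
  rwa [c.len_inv, ← c.len_inv, mul_inv_rev, inv_inv, c.s_inv] at this

/-! ### Parabolic subgroups and minimal coset representatives -/

lemma s_mem {S : Finset (Fin n)} {i : Fin n} (hi : i ∈ S) : c.s i ∈ c.Wsub S :=
  Subgroup.subset_closure ⟨i, hi, rfl⟩

/-- Right induction for `W_S`: the generators are involutions, so inverses need no separate step. -/
lemma Wsub_induction {S : Finset (Fin n)} {p : c.W → Prop} (one : p 1)
    (mul : ∀ u ∈ c.Wsub S, ∀ i ∈ S, p u → p (u * c.s i)) {u : c.W} (hu : u ∈ c.Wsub S) : p u := by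
  induction hu using Subgroup.closure_induction_right with
  | one => exact one
  | mul_right x hx y hy ih =>
    obtain ⟨i, hi, rfl⟩ := hy
    exact mul x hx i hi ih
  | mul_inv_cancel x hx y hy ih =>
    obtain ⟨i, hi, rfl⟩ := hy
    rw [c.s_inv]
    exact mul x hx i hi ih

/-- Elements of `W_S` change only the coordinates with index in `S`. -/
lemma act_apply_of_notMem {S : Finset (Fin n)} {u : c.W} (hu : u ∈ c.Wsub S) {j : Fin n}
    (hj : j ∉ S) : ∀ x, c.act u x j = x j := by
  refine c.Wsub_induction (p := fun u => ∀ x, c.act u x j = x j) ?_ ?_ hu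
  · simp [c.act_one]
  · intro u _ i hi ih x
    rw [c.act_mul, ih, c.act_s_apply_ne i j (fun h => hj (h ▸ hi))]

/-- `v` sends the simple roots indexed by `S` to positive roots. -/
def PosOn (S : Finset (Fin n)) (v : c.W) : Prop := ∀ i ∈ S, 0 ≤ c.act v (c.sroot i)

lemma PosOn.act_nonneg {c : RootSystemData n} {S : Finset (Fin n)} {v : c.W} (hv : c.PosOn S v)
    {x : Fin n → ℤ} (hx : 0 ≤ x) (hS : suppIn S x) : 0 ≤ c.act v x := by
  rw [c.act_eq_sum]
  refine Finset.sum_nonneg fun i _ => ?_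
  by_cases hi : i ∈ S
  · exact smul_nonneg (hx i) (hv i hi)
  · simp [hS i hi]

lemma suppIn_act {S : Finset (Fin n)} {u : c.W} (hu : u ∈ c.Wsub S) {x : Fin n → ℤ}
    (hx : suppIn S x) : suppIn S (c.act u x) := fun j hj => by
  rw [c.act_apply_of_notMem hu hj, hx j hj]

lemma suppIn_sroot {S : Finset (Fin n)} {i : Fin n} (hi : i ∈ S) : suppIn S (c.sroot i) :=
  fun j hj => by
    have : j ≠ i := fun h => hj (h ▸ hi)
    simp [sroot, this]

lemma len_mul_of_posOn {S : Finset (Fin n)} {v : c.W} (hv : c.PosOn S v) {u : c.W}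
    (hu : u ∈ c.Wsub S) : c.len (v * u) = c.len v + c.len u := by
  refine c.Wsub_induction (p := fun u => c.len (v * u) = c.len v + c.len u) ?_ ?_ hu
  · simp [c.len_one]
  · intro u hu i hi ih
    have hsupp := c.suppIn_act hu (c.suppIn_sroot hi)
    have hmem := c.act_mem u _ (c.sroot_mem i)
    rw [← mul_assoc]
    by_cases h0 : 0 ≤ c.act u (c.sroot i)
    · rw [c.len_mul_s_of_pos h0, c.len_mul_s_of_pos, ih, add_assoc]
      rw [c.act_mul]
      exact hv.act_nonneg h0 hsupp
    · have h1 := c.len_mul_s_of_neg h0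
      have h2 := c.len_mul_s_of_neg (w := v * u) (j := i) (by
        rw [c.act_mul]
        have h3 := hv.act_nonneg (c.neg_nonneg_of hmem h0) (fun j hj => by
          rw [Pi.neg_apply, hsupp j hj, neg_zero])
        have h4 := c.not_nonneg_neg (γ := c.act v (-c.act u (c.sroot i)))
          (c.act_mem _ _ (c.neg_mem _ hmem)) h3
        rwa [c.act_neg, neg_neg] at h4)
      omega

/-- `v` has minimal length in `v W_S`. -/
def IsMin (S : Finset (Fin n)) (v : c.W) : Prop := ∀ u ∈ c.Wsub S, c.len v ≤ c.len (v * u)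

lemma IsMin.posOn {c : RootSystemData n} {S : Finset (Fin n)} {v : c.W} (hv : c.IsMin S v) :
    c.PosOn S v := by
  intro i hi
  by_contra h
  have h1 := c.len_mul_s_of_neg h
  have h2 := hv _ (c.s_mem hi)
  omega

lemma isMin_one (S : Finset (Fin n)) : c.IsMin S 1 := fun u _ => by
  rw [c.len_one]
  exact Nat.zero_le _

/-- Uniqueness of the factorisation into a minimal coset representative and an element of `W_S`. -/
lemma factor_unique {S : Finset (Fin n)} {x y p q : c.W} (hx : c.IsMin S x) (hy : c.IsMin S y)
    (hp : p ∈ c.Wsub S) (hq : q ∈ c.Wsub S) (h : x * p = y * q) : x = y ∧ p = q := by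
  have hz : q * p⁻¹ ∈ c.Wsub S := mul_mem hq (inv_mem hp)
  have hxy : x = y * (q * p⁻¹) := by rw [← mul_assoc, ← h, mul_inv_cancel_right]
  have h1 := c.len_mul_of_posOn hy.posOn hz
  have h2 := hx _ (inv_mem hz)
  rw [← hxy] at h1
  rw [show x * (q * p⁻¹)⁻¹ = y by rw [hxy, mul_inv_cancel_right]] at h2
  have h3 : q * p⁻¹ = 1 := c.eq_one_of_len (by omega)
  rw [h3, mul_one] at hxy
  exact ⟨hxy, (mul_inv_eq_one.mp h3).symm⟩

lemma exists_factor (S : Finset (Fin n)) (w : c.W) :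
    ∃ x u, c.IsMin S x ∧ u ∈ c.Wsub S ∧ w = x * u := by
  obtain ⟨u, hu⟩ := exists_minimal_of_wellFoundedLT
    (fun k => ∃ u ∈ c.Wsub S, c.len (w * u) = k) ⟨_, 1, one_mem _, rfl⟩
  obtain ⟨⟨y, hy, hk⟩, hmin⟩ := hu
  refine ⟨w * y, y⁻¹, ?_, inv_mem hy, by simp⟩
  intro z hz
  rw [mul_assoc, hk]
  by_contra hlt
  exact hlt (hmin ⟨y * z, mul_mem hy hz, rfl⟩ (not_le.mp hlt).le)

/-- A nontrivial element of `W_T` has a left descent in `T`; otherwise `x⁻¹` would be positive on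
`T` and the lengths of `x⁻¹` and `x` would add up to the length of `x⁻¹ x = 1`. -/
lemma exists_left_descent {T : Finset (Fin n)} {x : c.W} (hx : x ∈ c.Wsub T) (h1 : x ≠ 1) :
    ∃ a ∈ T, ¬ 0 ≤ c.act x⁻¹ (c.sroot a) ∧ c.len (c.s a * x) + 1 = c.len x := by
  have hex : ∃ a ∈ T, ¬ 0 ≤ c.act x⁻¹ (c.sroot a) := by
    by_contra hcon
    push Not at hcon
    have h2 := c.len_mul_of_posOn (v := x⁻¹) hcon hx
    rw [inv_mul_cancel, c.len_one] at h2
    exact h1 (c.eq_one_of_len (by omega))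
  obtain ⟨a, ha, hn⟩ := hex
  refine ⟨a, ha, hn, ?_⟩
  have h3 := c.len_mul_s_of_neg hn
  rwa [c.len_inv, ← c.len_inv (_ * _), mul_inv_rev, inv_inv, c.s_inv] at h3

lemma Wsub_mono {S T : Finset (Fin n)} (h : S ⊆ T) : c.Wsub S ≤ c.Wsub T :=
  Subgroup.closure_mono (Set.image_mono (by exact_mod_cast h))

/-! ### The chain `Δ_0 ⊆ Δ_1 ⊆ ⋯ ⊆ Δ_{r+1}` and the decomposition -/

lemma mem_deltaSet {r k : ℕ} {j : Fin n} : j ∈ deltaSet n r k ↔ k = r + 1 ∨ (j : ℕ) < k := by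
  unfold deltaSet
  split_ifs with h <;> simp [h]

lemma deltaSet_mono {r k l : ℕ} (h : k ≤ l) (hl : l ≤ r + 1) : deltaSet n r k ⊆ deltaSet n r l := by
  intro j
  rw [mem_deltaSet, mem_deltaSet]
  omega

/-- The partial product `v_k ⋯ v_1` of the first `k` factors. -/
def partialProd {r : ℕ} (v : Fin (r + 1) → c.W) (k : ℕ) : c.W :=
  ((List.ofFn v).take k).reverse.prod

variable {c}

lemma partialProd_succ {r : ℕ} (v : Fin (r + 1) → c.W) {k : ℕ} (hk : k < r + 1) :
    c.partialProd v (k + 1) = v ⟨k, hk⟩ * c.partialProd v k := by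
  unfold partialProd
  rw [List.take_succ_eq_append_getElem (by simpa using hk), List.reverse_append, List.prod_append, List.getElem_ofFn]
  simp only [List.reverse_singleton, List.prod_singleton]

lemma IsDecomp.partialProd_top {r : ℕ} {w : c.W} {v : Fin (r + 1) → c.W} (h : c.IsDecomp r w v) :
    c.partialProd v (r + 1) = w := by
  rw [h.2, partialProd, List.take_of_length_le (by simp)]

lemma IsDecomp.partialProd_mem {r : ℕ} {w : c.W} {v : Fin (r + 1) → c.W} (h : c.IsDecomp r w v)
    {k : ℕ} (hk : k ≤ r + 1) : c.partialProd v k ∈ c.Wsub (deltaSet n r k) := by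
  induction k with
  | zero => simp [partialProd, one_mem]
  | succ k ih =>
    rw [partialProd_succ v (by omega)]
    exact mul_mem (h.1 ⟨k, by omega⟩).1
      (c.Wsub_mono (deltaSet_mono (Nat.le_succ k) hk) (ih (by omega)))

/-- A factorisation of a partial product as a minimal representative times an element of
`W_{Δ_k}` is the one given by the decomposition. -/
lemma IsDecomp.step {r : ℕ} {w : c.W} {v : Fin (r + 1) → c.W} (h : c.IsDecomp r w v)
    {k : ℕ} (hk : k < r + 1) {x p : c.W} (hx : c.IsMin (deltaSet n r k) x)
    (hp : p ∈ c.Wsub (deltaSet n r k)) (heq : c.partialProd v (k + 1) = x * p) :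
    v ⟨k, hk⟩ = x ∧ c.partialProd v k = p :=
  c.factor_unique (h.1 ⟨k, hk⟩).2 hx (h.partialProd_mem hk.le) hp
    (by rw [← partialProd_succ, heq])

lemma IsDecomp.partialProd_eq {r : ℕ} {w : c.W} {v : Fin (r + 1) → c.W} (h : c.IsDecomp r w v)
    {m : ℕ} (hm : w ∈ c.Wsub (deltaSet n r m)) {k : ℕ} (hmk : m ≤ k) (hk : k ≤ r + 1) :
    c.partialProd v k = w := by
  induction hk using Nat.decreasingInduction with
  | self => exact h.partialProd_top
  | of_succ k hk ih =>
    exact (h.step hk (c.isMin_one _) (c.Wsub_mono (deltaSet_mono hmk hk.le) hm)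
      (by rw [ih (by omega), one_mul])).2

lemma IsDecomp.eq_one {r : ℕ} {w : c.W} {v : Fin (r + 1) → c.W} (h : c.IsDecomp r w v)
    {m : ℕ} (hm : w ∈ c.Wsub (deltaSet n r m)) {k : ℕ} (hmk : m ≤ k) (hk : k < r + 1) :
    v ⟨k, hk⟩ = 1 :=
  (h.step hk (c.isMin_one _) (c.Wsub_mono (deltaSet_mono hmk hk.le) hm)
    (by rw [h.partialProd_eq hm (by omega) hk, one_mul])).1

lemma IsDecomp.agree {r : ℕ} {w w' : c.W} {v v' : Fin (r + 1) → c.W} (h : c.IsDecomp r w v)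
    (h' : c.IsDecomp r w' v') {m : ℕ} (hm : m ≤ r + 1)
    (heq : c.partialProd v m = c.partialProd v' m) {k : ℕ} (hk : k ≤ m) :
    c.partialProd v k = c.partialProd v' k ∧ ∀ i : Fin (r + 1), k ≤ i → (i : ℕ) < m → v i = v' i := by
  induction hk using Nat.decreasingInduction with
  | self => exact ⟨heq, fun i h1 h2 => absurd h1 (by omega)⟩
  | of_succ k hk ih =>
    obtain ⟨ih1, ih2⟩ := ih
    have hk' : k < r + 1 := by omega
    obtain ⟨h1, h2⟩ := h.step hk' (h'.1 ⟨k, hk'⟩).2 (h'.partialProd_mem hk'.le)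
      (by rw [ih1, partialProd_succ])
    refine ⟨h2, fun i hi him => ?_⟩
    rcases Nat.eq_or_lt_of_le hi with hki | hki
    · have : i = ⟨k, hk'⟩ := Fin.ext hki.symm
      rw [this, h1]
    · exact ih2 i hki him

end RootSystemData

/-- For every `w ≠ 1` there exist `w' ∈ W`, `γ ∈ R^+` and an index `j` with
`w = w'·s_γ`, `ℓ(w) = ℓ(w') + 1`, `⟨χ_j, γ^∨⟩ > 0`, and `gr(w) = gr(w') + e_m`,
where `m` is the unique index with `α_j ∈ Δ_m \ Δ_{m-1}` (in `0`-based coordinates,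
the grading coordinate `min j r`). -/
theorem exists_quantum_chevalley_cover {n : ℕ} (c : RootSystemData n)
    (r : ℕ) (hr1 : 1 ≤ r) (hrn : r < n)
    (w : c.W) (hw : w ≠ 1) :
    ∃ (w' : c.W) (γ : Fin n → ℤ) (j : Fin n),
      γ ∈ c.R ∧ (∀ i, 0 ≤ γ i) ∧
      w = w' * c.σ γ ∧ c.len w = c.len w' + 1 ∧ 0 < c.cor γ j ∧
      ∀ (v v' : Fin (r + 1) → c.W), c.IsDecomp r w v → c.IsDecomp r w' v' →
        ∀ k : Fin (r + 1),
          (c.len (v k) : ℤ) =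
            (c.len (v' k) : ℤ) + (if (k : ℕ) = min (j : ℕ) r then 1 else 0) := by
  classical
  have hfull : w ∈ c.Wsub (deltaSet n r (r + 1)) := by
    obtain ⟨l, rfl⟩ := c.generated w
    refine Subgroup.list_prod_mem _ fun y hy => ?_
    obtain ⟨i, -, rfl⟩ := List.mem_map.mp hy
    exact c.s_mem (RootSystemData.mem_deltaSet.mpr (Or.inl rfl))
  have hex : ∃ p, p ≤ r + 1 ∧ w ∈ c.Wsub (deltaSet n r p) := ⟨r + 1, le_rfl, hfull⟩
  obtain ⟨hp1, hp2⟩ := Nat.find_spec hex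
  have hmin := fun q hq => Nat.find_min hex (m := q) hq
  obtain ⟨m, hm⟩ : ∃ m, Nat.find hex = m + 1 := by
    refine Nat.exists_eq_succ_of_ne_zero fun h0 => hw ?_
    rw [h0] at hp2
    have : deltaSet n r 0 = ∅ := by
      ext j
      simp [RootSystemData.mem_deltaSet]
    rw [this] at hp2
    simpa [RootSystemData.Wsub] using hp2
  rw [hm] at hp1 hp2 hmin
  have hnot : w ∉ c.Wsub (deltaSet n r m) := fun h => hmin m (by omega) ⟨by omega, h⟩
  have hsub := c.Wsub_mono (RootSystemData.deltaSet_mono (n := n) (r := r) (Nat.le_succ m) hp1)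
  obtain ⟨x, u, hx, hu, hwxu⟩ := c.exists_factor (deltaSet n r m) w
  have hxT : x ∈ c.Wsub (deltaSet n r (m + 1)) := by
    have : x = w * u⁻¹ := by rw [hwxu, mul_inv_cancel_right]
    rw [this]
    exact mul_mem hp2 (inv_mem (hsub hu))
  have hx1 : x ≠ 1 := by
    rintro rfl
    rw [one_mul] at hwxu
    exact hnot (hwxu ▸ hu)
  obtain ⟨a, ha, hneg, hlen⟩ := c.exists_left_descent hxT hx1
  have hx' : c.IsMin (deltaSet n r m) (c.s a * x) := by
    intro y hy
    have h1 := hx y hy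
    have h2 := c.len_s_mul_le (c.s a * x * y) a
    rw [← mul_assoc, ← mul_assoc, c.s_mul_s, one_mul] at h2
    omega
  have hw'T : c.s a * w ∈ c.Wsub (deltaSet n r (m + 1)) := mul_mem (c.s_mem ha) hp2
  have hlw : c.len w = c.len (c.s a * w) + 1 := by
    rw [hwxu, ← mul_assoc, c.len_mul_of_posOn hx.posOn hu, c.len_mul_of_posOn hx'.posOn hu]
    omega
  set γ := c.act (c.s a * w)⁻¹ (c.sroot a) with hγ
  have hγR : γ ∈ c.R := c.act_mem _ _ (c.sroot_mem a)
  have hγ2 : γ = - c.act w⁻¹ (c.sroot a) := by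
    rw [hγ, mul_inv_rev, c.s_inv, c.act_mul, RootSystemData.s,
      c.act_refl_self (c.sroot_mem a), c.act_neg]
  have hγ0 : 0 ≤ γ := by
    rw [hγ2]
    apply c.neg_nonneg_of (c.act_mem _ _ (c.sroot_mem a))
    intro h0
    have h1 := c.len_mul_s_of_pos h0
    rw [c.len_inv, ← c.len_inv (_ * _), mul_inv_rev, inv_inv, c.s_inv] at h1
    omega
  have hγT : suppIn (deltaSet n r (m + 1)) γ :=
    c.suppIn_act (inv_mem hw'T) (c.suppIn_sroot ha)
  -- `x` sends `u γ = -x⁻¹ α_a > 0` to `-α_a`, so `γ` is not supported in `Δ_m`.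
  have huγ : c.act u γ = - c.act x⁻¹ (c.sroot a) := by
    rw [hγ2, c.act_neg, ← c.act_mul, hwxu, mul_inv_rev, mul_inv_cancel_left]
  have hγS : ∃ j, j ∉ deltaSet n r m ∧ γ j ≠ 0 := by
    by_contra hcon
    push Not at hcon
    have h1 : suppIn (deltaSet n r m) γ := hcon
    have h2 := c.suppIn_act hu h1
    have h3 : 0 ≤ c.act u γ := by
      rw [huγ]
      exact c.neg_nonneg_of (c.act_mem _ _ (c.sroot_mem a)) hneg
    have h4 := hx.posOn.act_nonneg h3 h2
    rw [huγ, c.act_neg, ← c.act_mul, mul_inv_cancel, c.act_one] at h4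
    exact c.not_nonneg_neg (c.sroot_mem a) (Pi.single_nonneg.mpr zero_le_one) h4
  obtain ⟨j, hjS, hj0⟩ := hγS
  have hjT : j ∈ deltaSet n r (m + 1) := by
    by_contra hcon
    exact hj0 (hγT j hcon)
  have hjm : min (j : ℕ) r = m := by
    rw [RootSystemData.mem_deltaSet] at hjS hjT
    omega
  have hjpos : 0 < γ j := lt_of_le_of_ne (hγ0 j) (Ne.symm hj0)
  refine ⟨c.s a * w, γ, j, hγR, hγ0, ?_, hlw,
    (c.cor_pos (∑ i, γ i).toNat γ hγR hγ0 (Int.self_le_toNat _) j).2 hjpos, ?_⟩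
  · have h1 : c.σ γ = (c.s a * w)⁻¹ * c.s a * (c.s a * w) := by
      have := c.refl_act (c.s a * w)⁻¹ _ (c.sroot_mem a)
      rwa [inv_inv] at this
    rw [h1, ← mul_assoc, mul_inv_cancel_left, ← mul_assoc, c.s_mul_s, one_mul]
  · intro v v' hv hv' k
    have hmr : m < r + 1 := hp1
    obtain ⟨e1, e2⟩ := hv.step hmr hx hu
      ((hv.partialProd_eq hp2 le_rfl hp1).trans hwxu)
    obtain ⟨e1', e2'⟩ := hv'.step hmr hx' hu
      ((hv'.partialProd_eq hw'T le_rfl hp1).trans (by rw [hwxu, mul_assoc]))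
    rw [hjm]
    rcases lt_trichotomy (k : ℕ) m with hk | hk | hk
    · rw [((hv.agree hv' hmr.le (e2.trans e2'.symm) (Nat.zero_le m)).2 k (Nat.zero_le _) hk),
        if_neg hk.ne, add_zero]
    · have : k = ⟨m, hmr⟩ := Fin.ext hk
      rw [this, e1, e1', if_pos rfl]
      exact_mod_cast hlen.symm
    · have h1 := hv.eq_one hp2 hk k.2
      have h2 := hv'.eq_one hw'T hk k.2
      rw [Fin.eta] at h1 h2
      rw [h1, h2, if_neg hk.ne', add_zero]
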